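/- arXiv:2604.13913 — 2 statements merged into one kernel-verified Lean document; each statement's English description precedes it below -/
import Mathlib

section
/- Let b > 1, β ∈ (0, 1/2), and s ∈ (2, 3 − 2β). There exists a constant C₀ > 0, depending only on b, β and s, such that for all x, y ∈ [0,1] with 0 < |x − y| ≤ 1/(2b²), the expectation over (Θ, Λ) with respect to the infinite product of uniform measures on [0,1] satisfies E[ ((x − y)² + |f_{Θ,Λ}(x) − f_{Θ,Λ}(y)|²)^{−s/2} ] ≤ C₀ |x − y|^{2 − s − 2β}. -/
open MeasureTheory

/-- First coordinate of the random vector-valued Weierstrass function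
`t ↦ ∑ b^{-βn} cos(2π(bⁿ t + θₙ))`. -/
noncomputable def W1 (b β : ℝ) (Θ : ℕ → ℝ) (t : ℝ) : ℝ :=
  ∑' n : ℕ, b ^ (-β * (n : ℝ)) * Real.cos (2 * Real.pi * (b ^ n * t + Θ n))

/-- Second coordinate of the random vector-valued Weierstrass function
`t ↦ ∑ b^{-βn} sin(2π(bⁿ t + λₙ))`. -/
noncomputable def W2 (b β : ℝ) (Λ : ℕ → ℝ) (t : ℝ) : ℝ :=
  ∑' n : ℕ, b ^ (-β * (n : ℝ)) * Real.sin (2 * Real.pi * (b ^ n * t + Λ n))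

/-- Euclidean distance `|f_{Θ,Λ}(x) - f_{Θ,Λ}(y)|` in ℝ². -/
noncomputable def Wdist (b β : ℝ) (Θ Λ : ℕ → ℝ) (x y : ℝ) : ℝ :=
  Real.sqrt ((W1 b β Θ x - W1 b β Θ y) ^ 2 + (W2 b β Λ x - W2 b β Λ y) ^ 2)

/-- The graph `G(f_{Θ,Λ}) = {(t, f_{Θ,Λ}(t)) : t ∈ [0,1]}` inside ℝ³ = ℝ × ℝ². -/
def Wgraph (b β : ℝ) (Θ Λ : ℕ → ℝ) : Set (ℝ × ℝ × ℝ) :=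
  {p | ∃ t ∈ Set.Icc (0 : ℝ) 1, p = (t, W1 b β Θ t, W2 b β Λ t)}

/-- `μ` is the infinite product over `ℕ` of the uniform probability measures on `[0,1]`:
the measure of every measurable cylinder is the corresponding finite product of
uniform measures. -/
def IsUniformProductMeasure (μ : Measure (ℕ → ℝ)) : Prop :=
  ∀ (t : Finset ℕ) (s : ℕ → Set ℝ), (∀ i, MeasurableSet (s i)) →
    μ {f : ℕ → ℝ | ∀ i ∈ t, f i ∈ s i} =
      ∏ i ∈ t, (volume.restrict (Set.Icc (0 : ℝ) 1)) (s i)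

open Set Filter

/-- Uniform measure on `[0,1]`. -/
noncomputable abbrev unifM : Measure ℝ := volume.restrict (Set.Icc (0 : ℝ) 1)

instance unifM_prob : IsProbabilityMeasure unifM := ⟨by simp [unifM]⟩

lemma uniform_prob {μ : Measure (ℕ → ℝ)} (hμ : IsUniformProductMeasure μ) :
    IsProbabilityMeasure μ :=
  ⟨by simpa using hμ ∅ (fun _ => univ) (fun _ => MeasurableSet.univ)⟩

lemma uniform_eq {μ : Measure (ℕ → ℝ)} (hμ : IsUniformProductMeasure μ) :
    μ = Measure.infinitePi (fun _ : ℕ => unifM) := by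
  apply Measure.eq_infinitePi
  intro s t ht
  exact hμ s t ht

lemma lintegral_update {μ : Measure (ℕ → ℝ)} (hμ : IsUniformProductMeasure μ) (n : ℕ)
    (F : (ℕ → ℝ) → ENNReal) (hF : Measurable F) :
    ∫⁻ Θ, F Θ ∂μ = ∫⁻ Θ, ∫⁻ t, F (Function.update Θ n t) ∂unifM ∂μ := by
  have := uniform_prob hμ
  have key : (μ.prod unifM).map (fun p : (ℕ → ℝ) × ℝ => Function.update p.1 n p.2) = μ := by
    have hm : Measurable (fun p : (ℕ → ℝ) × ℝ => Function.update p.1 n p.2) :=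
      measurable_update'
    conv_rhs => rw [uniform_eq hμ]
    apply Measure.eq_infinitePi
    intro s t ht
    rw [Measure.map_apply hm (MeasurableSet.pi s.countable_toSet (fun i _ => ht i))]
    by_cases hn : n ∈ s
    · have : (fun p : (ℕ → ℝ) × ℝ => Function.update p.1 n p.2) ⁻¹' (Set.pi s t)
          = {f : ℕ → ℝ | ∀ i ∈ s.erase n, f i ∈ t i} ×ˢ (t n) := by
        ext p
        simp only [mem_preimage, Set.mem_pi, mem_prod, mem_ofPred_eq, Finset.mem_erase,
          Finset.mem_coe]
        constructor
        · intro h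
          refine ⟨fun i hi => ?_, ?_⟩
          · have := h i hi.2
            rwa [Function.update_of_ne hi.1] at this
          · simpa using h n hn
        · rintro ⟨h1, h2⟩ i hi
          by_cases hin : i = n
          · subst hin; simpa using h2
          · rw [Function.update_of_ne hin]; exact h1 i ⟨hin, hi⟩
      rw [this, Measure.prod_prod, hμ _ _ ht, Finset.prod_erase_mul _ _ hn]
    · have : (fun p : (ℕ → ℝ) × ℝ => Function.update p.1 n p.2) ⁻¹' (Set.pi s t)
          = {f : ℕ → ℝ | ∀ i ∈ s, f i ∈ t i} ×ˢ univ := by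
        ext p
        simp only [mem_preimage, Set.mem_pi, mem_prod, mem_ofPred_eq, mem_univ, and_true,
          Finset.mem_coe]
        refine forall₂_congr fun i hi => ?_
        rw [Function.update_of_ne (by rintro rfl; exact hn hi)]
      rw [this, Measure.prod_prod, hμ _ _ ht, measure_univ, mul_one]
  conv_lhs => rw [← key]
  rw [lintegral_map hF measurable_update', lintegral_prod]
  exact (hF.comp measurable_update').aemeasurable

lemma lintegral_sin_le (Q q r S : ℝ) (hq : 0 < q) (hQ : q ≤ |Q|) (φ : ℝ → ENNReal) :
    ∫⁻ t, ENNReal.ofReal |Real.cos (2 * Real.pi * t + r)| *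
        φ (S + Q * Real.sin (2 * Real.pi * t + r)) ∂unifM
      ≤ ENNReal.ofReal (4 / q) * ∫⁻ u, φ u := by
  have hpi := Real.pi_gt_three
  set m : ℤ := ⌊r / Real.pi⌋ with hm
  have hm1 : (m : ℝ) * Real.pi ≤ r := by
    have := Int.floor_le (r / Real.pi)
    rwa [le_div_iff₀ (by positivity)] at this
  have hm2 : r < ((m : ℝ) + 1) * Real.pi := by
    have := Int.lt_floor_add_one (r / Real.pi)
    rwa [div_lt_iff₀ (by positivity)] at this
  let T : Fin 4 → Set ℝ := fun k =>
    {t | 2 * Real.pi * t + r - ((m + (k : ℕ) : ℤ) : ℝ) * Real.pi ∈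
      Icc (-(Real.pi / 2)) (Real.pi / 2)}
  have hTm : ∀ k, MeasurableSet (T k) := fun k => by
    apply measurableSet_preimage (f := fun t : ℝ =>
      2 * Real.pi * t + r - ((m + (k : ℕ) : ℤ) : ℝ) * Real.pi) (by fun_prop) measurableSet_Icc
  have hcover : Icc (0 : ℝ) 1 ⊆ ⋃ k, T k := by
    intro t ht
    obtain ⟨h0, h1⟩ := ht
    set v := 2 * Real.pi * t + r - m * Real.pi with hv
    have hv0 : 0 ≤ v := by nlinarith
    have hv1 : v ≤ 3 * Real.pi := by nlinarith
    rw [mem_iUnion]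
    by_cases c0 : v ≤ Real.pi / 2
    · refine ⟨0, ?_⟩; simp only [T, mem_ofPred_eq, mem_Icc]; push_cast; simp; constructor <;> linarith
    by_cases c1 : v ≤ 3 * Real.pi / 2
    · refine ⟨1, ?_⟩; simp only [T, mem_ofPred_eq, mem_Icc]; push_cast; simp; constructor <;> linarith
    by_cases c2 : v ≤ 5 * Real.pi / 2
    · refine ⟨2, ?_⟩; simp only [T, mem_ofPred_eq, mem_Icc]; push_cast; simp; constructor <;> linarith
    · refine ⟨3, ?_⟩; simp only [T, mem_ofPred_eq, mem_Icc]; push_cast; simp; constructor <;> linarith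
  let g : ℝ → ℝ := fun t => S + Q * Real.sin (2 * Real.pi * t + r)
  let gder : ℝ → ℝ := fun t => Q * (Real.cos (2 * Real.pi * t + r) * (2 * Real.pi))
  have hg : ∀ t, HasDerivAt g (gder t) t := by
    intro t
    have h1 : HasDerivAt (fun t : ℝ => 2 * Real.pi * t + r) (2 * Real.pi) t := by
      simpa using ((hasDerivAt_id t).const_mul (2 * Real.pi)).add_const r
    exact (h1.sin.const_mul Q).const_add S
  have hQ0 : Q ≠ 0 := by rintro rfl; simp at hQ; linarith
  have hinj : ∀ k, InjOn g (T k) := by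
    intro k x hx y hy hxy
    have h1 : Real.sin (2 * Real.pi * x + r) = Real.sin (2 * Real.pi * y + r) := by
      have : Q * Real.sin (2 * Real.pi * x + r) = Q * Real.sin (2 * Real.pi * y + r) := by
        simpa [g] using hxy
      exact mul_left_cancel₀ hQ0 this
    have h2 := Real.injOn_sin hx hy (by
      simp only [Real.sin_sub_int_mul_pi]; rw [h1])
    have : 2 * Real.pi * x = 2 * Real.pi * y := by linarith
    exact mul_left_cancel₀ (by positivity) this
  have hpiece : ∀ k, ∫⁻ t in T k, ENNReal.ofReal |gder t| * φ (g t) ≤ ∫⁻ u, φ u := by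
    intro k
    rw [← lintegral_image_eq_lintegral_abs_deriv_mul (hTm k)
      (fun x _ => (hg x).hasDerivWithinAt) (hinj k)]
    exact setLIntegral_le_lintegral _ _
  have htot : ∫⁻ t in Icc (0 : ℝ) 1, ENNReal.ofReal |gder t| * φ (g t) ≤ 4 * ∫⁻ u, φ u := by
    calc _ ≤ ∫⁻ t in ⋃ k, T k, ENNReal.ofReal |gder t| * φ (g t) := lintegral_mono_set hcover
      _ ≤ ∑' k, ∫⁻ t in T k, ENNReal.ofReal |gder t| * φ (g t) := lintegral_iUnion_le _ _
      _ ≤ ∑' k : Fin 4, ∫⁻ u, φ u := ENNReal.tsum_le_tsum hpiece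
      _ = _ := by simp [tsum_fintype]
  calc _ ≤ ∫⁻ t in Icc (0 : ℝ) 1, ENNReal.ofReal (1 / q) * (ENNReal.ofReal |gder t| * φ (g t)) := by
        apply lintegral_mono
        intro t
        simp only [g]
        rw [← mul_assoc, ← ENNReal.ofReal_mul (by positivity)]
        gcongr
        simp only [gder, abs_mul]
        have : 1 ≤ 1 / q * |Q| := by rw [one_div, ← div_eq_inv_mul, le_div_iff₀ hq]; linarith
        have h2 : |(2 : ℝ)| * |Real.pi| = 2 * Real.pi := by
          rw [abs_of_pos (by positivity), abs_of_pos (by positivity)]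
        rw [h2]
        have h3 := abs_nonneg (Real.cos (2 * Real.pi * t + r))
        calc |Real.cos (2 * Real.pi * t + r)| ≤ 1 * (|Real.cos (2 * Real.pi * t + r)| * (2 * Real.pi)) := by
              nlinarith
          _ ≤ (1 / q * |Q|) * (|Real.cos (2 * Real.pi * t + r)| * (2 * Real.pi)) := by gcongr
          _ = _ := by ring
    _ = ENNReal.ofReal (1 / q) * ∫⁻ t in Icc (0 : ℝ) 1, (ENNReal.ofReal |gder t| * φ (g t)) := by
        rw [lintegral_const_mul' _ _ ENNReal.ofReal_ne_top]
    _ ≤ ENNReal.ofReal (1 / q) * (4 * ∫⁻ u, φ u) := by gcongr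
    _ = _ := by
        rw [← mul_assoc]
        congr 1
        rw [show (4 : ENNReal) = ENNReal.ofReal 4 by simp, ← ENNReal.ofReal_mul (by positivity)]
        congr 1; ring

/-- the weight `|cos|^{-1/2}` -/
noncomputable def wgt (t : ℝ) : ENNReal := (ENNReal.ofReal |Real.cos t|) ^ (-(1 / 2) : ℝ)

@[fun_prop]
lemma wgt_meas : Measurable wgt := by unfold wgt; fun_prop

lemma lintegral_wgt : ∃ M : ENNReal, M ≠ ⊤ ∧ ∀ r : ℝ,
    ∫⁻ t, wgt (2 * Real.pi * t + r) ∂unifM ≤ M := by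
  let φ : ℝ → ENNReal := (Icc (-1 : ℝ) 1).indicator
    (fun u => (ENNReal.ofReal |u|) ^ (-(1 / 2) : ℝ))
  have hφ : ∫⁻ u, φ u ≠ ⊤ := by
    have h1 : IntegrableOn (fun u : ℝ => |u| ^ (-(1 / 2) : ℝ)) (Icc (-1) 1) := by
      have h2 : IntegrableOn (fun u : ℝ => |u| ^ (-(1 / 2) : ℝ)) (Ioc 0 1) := by
        have := (intervalIntegral.intervalIntegrable_rpow' (a := 0) (b := 1)
          (r := (-(1 / 2) : ℝ)) (by norm_num))
        rw [intervalIntegrable_iff_integrableOn_Ioc_of_le zero_le_one] at this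
        refine this.congr_fun (fun u hu => ?_) measurableSet_Ioc
        simp only
        rw [abs_of_pos hu.1]
      have h3 : IntegrableOn (fun u : ℝ => |u| ^ (-(1 / 2) : ℝ)) (Icc 0 1) := by
        rwa [integrableOn_Icc_iff_integrableOn_Ioc]
      have h4 : IntegrableOn (fun u : ℝ => |u| ^ (-(1 / 2) : ℝ)) (Icc (-1) 0) := by
        have := h3.comp_neg
        simpa using this
      have := h4.union h3
      rwa [Icc_union_Icc_eq_Icc (by norm_num) (by norm_num)] at this
    have h5 := h1.lintegral_lt_top
    rw [lintegral_indicator measurableSet_Icc]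
    refine ne_of_lt (lt_of_le_of_lt (le_of_eq ?_) h5)
    apply lintegral_congr_ae
    apply ae_restrict_of_ae
    have : ∀ᵐ u : ℝ, u ≠ 0 := by simp [ae_iff]
    filter_upwards [this] with u hu
    rw [ENNReal.ofReal_rpow_of_pos (abs_pos.2 hu)]
  refine ⟨2 + 2 * (ENNReal.ofReal (4 / 1) * ∫⁻ u, φ u), ?_, fun r => ?_⟩
  · exact ENNReal.add_ne_top.2 ⟨by simp, ENNReal.mul_ne_top (by simp)
      (ENNReal.mul_ne_top ENNReal.ofReal_ne_top hφ)⟩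
  · have hA := lintegral_sin_le 1 1 (r + Real.pi / 2) 0 one_pos (by simp) φ
    have hpt : ∀ t : ℝ, wgt (2 * Real.pi * t + r) ≤ 2 + 2 *
        (ENNReal.ofReal |Real.cos (2 * Real.pi * t + (r + Real.pi / 2))| *
        φ (0 + 1 * Real.sin (2 * Real.pi * t + (r + Real.pi / 2)))) := by
      intro t
      rw [← add_assoc, Real.cos_add_pi_div_two, Real.sin_add_pi_div_two, zero_add, one_mul, abs_neg]
      set u := 2 * Real.pi * t + r
      have hφu : φ (Real.cos u) = wgt u := by
        simp only [φ]
        rw [indicator_of_mem (show Real.cos u ∈ Icc (-1 : ℝ) 1 from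
          ⟨Real.neg_one_le_cos u, Real.cos_le_one u⟩)]; rfl
      rw [hφu]
      by_cases hc : 1 / 2 ≤ |Real.cos u|
      · refine le_trans ?_ le_self_add
        unfold wgt
        rw [ENNReal.ofReal_rpow_of_pos (by linarith)]
        rw [show (2 : ENNReal) = ENNReal.ofReal 2 by simp]
        apply ENNReal.ofReal_le_ofReal
        calc |Real.cos u| ^ (-(1 / 2) : ℝ) ≤ (1 / 2) ^ (-(1 / 2) : ℝ) :=
              Real.rpow_le_rpow_of_nonpos (by norm_num) hc (by norm_num)
          _ ≤ (1 / 2) ^ (-1 : ℝ) :=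
              Real.rpow_le_rpow_of_exponent_ge (by norm_num) (by norm_num) (by norm_num)
          _ = 2 := by rw [Real.rpow_neg_one]; norm_num
      · push Not at hc
        refine le_trans ?_ le_add_self
        have hs : 1 / 2 ≤ |Real.sin u| := by
          by_contra h
          push Not at h
          have := Real.sin_sq_add_cos_sq u
          rw [← sq_abs (Real.sin u), ← sq_abs (Real.cos u)] at this
          nlinarith [abs_nonneg (Real.sin u), abs_nonneg (Real.cos u)]
        rw [← mul_assoc]
        calc wgt u = 1 * wgt u := (one_mul _).symm
          _ ≤ _ := by
            gcongr
            rw [show (2 : ENNReal) = ENNReal.ofReal 2 by simp, ← ENNReal.ofReal_mul (by norm_num)]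
            rw [ENNReal.one_le_ofReal]; linarith
    calc _ ≤ _ := lintegral_mono hpt
      _ = 2 + 2 * ∫⁻ t, ENNReal.ofReal |Real.cos (2 * Real.pi * t + (r + Real.pi / 2))| *
        φ (0 + 1 * Real.sin (2 * Real.pi * t + (r + Real.pi / 2))) ∂unifM := by
        rw [lintegral_add_left measurable_const, lintegral_const_mul' _ _ (by simp), lintegral_const,
          measure_univ, mul_one]
      _ ≤ _ := by gcongr

/-- Random series `∑ qₙ sin(2πθₙ + rₙ)`. -/
noncomputable def rser (q r : ℕ → ℝ) (Θ : ℕ → ℝ) : ℝ :=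
  ∑' n, q n * Real.sin (2 * Real.pi * Θ n + r n)

lemma rser_bound (q r : ℕ → ℝ) (n : ℕ) (Θ : ℕ → ℝ) :
    ‖q n * Real.sin (2 * Real.pi * Θ n + r n)‖ ≤ |q n| := by
  rw [Real.norm_eq_abs, abs_mul]
  exact mul_le_of_le_one_right (abs_nonneg _) (Real.abs_sin_le_one _)

lemma rser_meas {q : ℕ → ℝ} (r : ℕ → ℝ) (hq : Summable fun n => |q n|) :
    Measurable (rser q r) := by
  apply Continuous.measurable
  unfold rser
  exact continuous_tsum (fun n => by fun_prop) hq (fun n Θ => rser_bound q r n Θ)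

lemma rser_update {q : ℕ → ℝ} (r : ℕ → ℝ) (hq : Summable fun n => |q n|) (k : ℕ) (Θ : ℕ → ℝ) :
    ∃ S : ℝ, ∀ t, rser q r (Function.update Θ k t)
      = S + q k * Real.sin (2 * Real.pi * t + r k) := by
  refine ⟨∑' n, if n = k then 0 else q n * Real.sin (2 * Real.pi * Θ n + r n), fun t => ?_⟩
  have hs : Summable fun n => q n * Real.sin (2 * Real.pi * (Function.update Θ k t) n + r n) :=
    Summable.of_norm_bounded hq (fun n => rser_bound q r n _)
  unfold rser
  rw [hs.tsum_eq_add_tsum_ite k, add_comm, Function.update_self]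
  congr 1
  apply tsum_congr
  intro n
  split_ifs with h
  · rfl
  · rw [Function.update_of_ne h]

lemma one_le_wgt (a b c : ENNReal) (hac : a ≤ c) (hbc : b ≤ c) (h0 : c ≠ 0) (ht : c ≠ ⊤) :
    1 ≤ c * (a ^ (-(1 / 2) : ℝ) * b ^ (-(1 / 2) : ℝ)) := by
  have hmono : ∀ x, x ≤ c → c ^ (-(1 / 2) : ℝ) ≤ x ^ (-(1 / 2) : ℝ) := by
    intro x hx
    rw [ENNReal.rpow_neg, ENNReal.rpow_neg]
    exact ENNReal.inv_le_inv.2 (ENNReal.rpow_le_rpow hx (by norm_num))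
  calc (1 : ENNReal) = c * (c ^ (-(1 / 2) : ℝ) * c ^ (-(1 / 2) : ℝ)) := by
        rw [← ENNReal.rpow_add _ _ h0 ht]
        norm_num [ENNReal.rpow_neg_one]
        rw [ENNReal.mul_inv_cancel h0 ht]
    _ ≤ _ := by
        exact mul_le_mul_right (mul_le_mul' (hmono a hac) (hmono b hbc)) c

lemma three_wgt (a b c : ENNReal) (ha : a ≠ 0) (hb : b ≠ 0) (hc : c ≠ 0)
    (ha' : a ≠ ⊤) (hb' : b ≠ ⊤) (hc' : c ≠ ⊤) :
    1 ≤ c * (a ^ (-(1 / 2) : ℝ) * b ^ (-(1 / 2) : ℝ))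
      + b * (a ^ (-(1 / 2) : ℝ) * c ^ (-(1 / 2) : ℝ))
      + a * (b ^ (-(1 / 2) : ℝ) * c ^ (-(1 / 2) : ℝ)) := by
  rcases le_total a b with h1 | h1 <;> rcases le_total b c with h2 | h2 <;>
    rcases le_total a c with h3 | h3
  all_goals first
    | exact (one_le_wgt a b c ‹_› ‹_› hc hc').trans (le_self_add.trans le_self_add)
    | exact (one_le_wgt a c b ‹_› ‹_› hb hb').trans (le_add_self.trans le_self_add)
    | exact (one_le_wgt b c a ‹_› ‹_› ha ha').trans le_add_self
    | exact (one_le_wgt a b c (h1.trans h2) h2 hc hc').trans (le_self_add.trans le_self_add)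
    | exact (one_le_wgt b c a h1 (h2.trans h1) ha ha').trans le_add_self

lemma wgt_one {μ : Measure (ℕ → ℝ)} (hμ : IsUniformProductMeasure μ) {M : ENNReal} 
    (hM : ∀ r : ℝ, ∫⁻ t, wgt (2 * Real.pi * t + r) ∂unifM ≤ M)
    (r : ℕ → ℝ) (i : ℕ) : ∫⁻ Θ, wgt (2 * Real.pi * Θ i + r i) ∂μ ≤ M := by
  have := uniform_prob hμ
  rw [lintegral_update hμ i _ (by fun_prop)]
  simp only [Function.update_self]
  rw [lintegral_const, measure_univ, mul_one]
  exact hM _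

lemma wgt_two {μ : Measure (ℕ → ℝ)} (hμ : IsUniformProductMeasure μ) {M : ENNReal} 
    (hM : ∀ r : ℝ, ∫⁻ t, wgt (2 * Real.pi * t + r) ∂unifM ≤ M)
    (r : ℕ → ℝ) (i j : ℕ) (hij : i ≠ j) :
    ∫⁻ Θ, wgt (2 * Real.pi * Θ i + r i) * wgt (2 * Real.pi * Θ j + r j) ∂μ ≤ M * M := by
  have hm : ∀ i, Measurable fun Θ : ℕ → ℝ => wgt (2 * Real.pi * Θ i + r i) :=
    fun i => wgt_meas.comp (by fun_prop)
  have hmt : ∀ i, Measurable fun t : ℝ => wgt (2 * Real.pi * t + r i) :=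
    fun i => wgt_meas.comp (by fun_prop)
  rw [lintegral_update hμ j _ (by fun_prop)]
  simp only [Function.update_self, Function.update_of_ne hij]
  calc _ = ∫⁻ Θ, wgt (2 * Real.pi * Θ i + r i) * ∫⁻ t, wgt (2 * Real.pi * t + r j) ∂unifM ∂μ := by
        congr 1; ext Θ; rw [lintegral_const_mul _ (hmt j)]
    _ ≤ ∫⁻ Θ, wgt (2 * Real.pi * Θ i + r i) * M ∂μ := by
        apply lintegral_mono; intro Θ; simp only; gcongr; exact hM _
    _ = (∫⁻ Θ, wgt (2 * Real.pi * Θ i + r i) ∂μ) * M := by rw [lintegral_mul_const _ (hm i)]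
    _ ≤ _ := by gcongr; exact wgt_one hμ hM r i

lemma rser_term {μ : Measure (ℕ → ℝ)} (hμ : IsUniformProductMeasure μ) {M : ENNReal} 
    (hM : ∀ r : ℝ, ∫⁻ t, wgt (2 * Real.pi * t + r) ∂unifM ≤ M)
    {q : ℕ → ℝ} (r : ℕ → ℝ) (hq : Summable fun n => |q n|) (i j k : ℕ)
    (hij : i ≠ j) (hik : i ≠ k) (hjk : j ≠ k) (κ : ℝ) (hκ : 0 < κ) (hk : κ ≤ |q k|)
    (φ : ℝ → ENNReal) (hφ : Measurable φ) :
    ∫⁻ Θ, φ (rser q r Θ) * (ENNReal.ofReal |Real.cos (2 * Real.pi * Θ k + r k)| *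
        (wgt (2 * Real.pi * Θ i + r i) * wgt (2 * Real.pi * Θ j + r j))) ∂μ
      ≤ M * M * (ENNReal.ofReal (4 / κ) * ∫⁻ u, φ u) := by
  have hm : ∀ i, Measurable fun Θ : ℕ → ℝ => wgt (2 * Real.pi * Θ i + r i) :=
    fun i => wgt_meas.comp (by fun_prop)
  have hX := rser_meas r hq
  rw [lintegral_update hμ k _ (by fun_prop)]
  simp only [Function.update_self, Function.update_of_ne hik, Function.update_of_ne hjk]
  calc _ ≤ ∫⁻ Θ, (wgt (2 * Real.pi * Θ i + r i) * wgt (2 * Real.pi * Θ j + r j)) *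
        (ENNReal.ofReal (4 / κ) * ∫⁻ u, φ u) ∂μ := by
        apply lintegral_mono
        intro Θ
        simp only
        obtain ⟨S, hS⟩ := rser_update r hq k Θ
        simp only [hS]
        calc _ = ∫⁻ t, (wgt (2 * Real.pi * Θ i + r i) * wgt (2 * Real.pi * Θ j + r j)) *
              (ENNReal.ofReal |Real.cos (2 * Real.pi * t + r k)| *
              φ (S + q k * Real.sin (2 * Real.pi * t + r k))) ∂unifM := by
              congr 1; ext t; ring
          _ = (wgt (2 * Real.pi * Θ i + r i) * wgt (2 * Real.pi * Θ j + r j)) * ∫⁻ t,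
              (ENNReal.ofReal |Real.cos (2 * Real.pi * t + r k)| *
              φ (S + q k * Real.sin (2 * Real.pi * t + r k))) ∂unifM := by
              rw [lintegral_const_mul _ (by fun_prop)]
          _ ≤ _ := by
              gcongr
              exact lintegral_sin_le _ _ _ _ hκ hk φ
    _ = (∫⁻ Θ, (wgt (2 * Real.pi * Θ i + r i) * wgt (2 * Real.pi * Θ j + r j)) ∂μ) *
        (ENNReal.ofReal (4 / κ) * ∫⁻ u, φ u) := by
        rw [lintegral_mul_const _ (by fun_prop)]
    _ ≤ _ := by gcongr; exact wgt_two hμ hM r i j hij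

lemma rser_main {μ : Measure (ℕ → ℝ)} (hμ : IsUniformProductMeasure μ) {M : ENNReal} (hMt : M ≠ ⊤)
    (hM : ∀ r : ℝ, ∫⁻ t, wgt (2 * Real.pi * t + r) ∂unifM ≤ M)
    {q : ℕ → ℝ} (r : ℕ → ℝ) (hq : Summable fun n => |q n|) (i j k : ℕ)
    (hij : i ≠ j) (hik : i ≠ k) (hjk : j ≠ k) (κ : ℝ) (hκ : 0 < κ)
    (hi : κ ≤ |q i|) (hj : κ ≤ |q j|) (hk : κ ≤ |q k|)
    (φ : ℝ → ENNReal) (hφ : Measurable φ) :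
    ∫⁻ Θ, φ (rser q r Θ) ∂μ ≤ 3 * (M * M * (ENNReal.ofReal (4 / κ) * ∫⁻ u, φ u)) := by
  have hm : ∀ i, Measurable fun Θ : ℕ → ℝ => wgt (2 * Real.pi * Θ i + r i) :=
    fun i => wgt_meas.comp (by fun_prop)
  have hX := rser_meas r hq
  have hne : ∀ i, ∀ᵐ Θ ∂μ, ENNReal.ofReal |Real.cos (2 * Real.pi * Θ i + r i)| ≠ 0 := by
    intro i
    filter_upwards [ae_lt_top (hm i) (ne_top_of_le_ne_top hMt (wgt_one hμ hM r i))] with Θ hΘ h0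
    unfold wgt at hΘ
    rw [h0, ENNReal.zero_rpow_of_neg (by norm_num)] at hΘ
    exact lt_irrefl _ hΘ
  let A : ℕ → ℕ → ℕ → (ℕ → ℝ) → ENNReal := fun i j k Θ =>
    φ (rser q r Θ) * (ENNReal.ofReal |Real.cos (2 * Real.pi * Θ k + r k)| *
        (wgt (2 * Real.pi * Θ i + r i) * wgt (2 * Real.pi * Θ j + r j)))
  have hA : ∀ i j k, Measurable (A i j k) := fun i j k =>
    by fun_prop
  calc _ ≤ ∫⁻ Θ, (A i j k Θ + A i k j Θ + A j k i Θ) ∂μ := by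
        apply lintegral_mono_ae
        filter_upwards [hne i, hne j, hne k] with Θ h1 h2 h3
        have := three_wgt _ _ _ h1 h2 h3 ENNReal.ofReal_ne_top ENNReal.ofReal_ne_top
          ENNReal.ofReal_ne_top
        simp only [A]
        rw [← mul_add, ← mul_add]
        exact le_mul_of_one_le_right' this
    _ = ∫⁻ Θ, A i j k Θ ∂μ + ∫⁻ Θ, A i k j Θ ∂μ + ∫⁻ Θ, A j k i Θ ∂μ := by
        rw [lintegral_add_left (by fun_prop), lintegral_add_left (by fun_prop)]
    _ ≤ M * M * (ENNReal.ofReal (4 / κ) * ∫⁻ u, φ u) + M * M * (ENNReal.ofReal (4 / κ) * ∫⁻ u, φ u)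
        + M * M * (ENNReal.ofReal (4 / κ) * ∫⁻ u, φ u) := by
        gcongr
        · exact rser_term hμ hM r hq i j k hij hik hjk κ hκ hk φ hφ
        · exact rser_term hμ hM r hq i k j hik hij hjk.symm κ hκ hj φ hφ
        · exact rser_term hμ hM r hq j k i hjk hij.symm hik.symm κ hκ hi φ hφ
    _ = _ := by ring

lemma lintegral_scale (h s : ℝ) (hh : 0 < h) :
    ∫⁻ u : ℝ, ENNReal.ofReal ((h ^ 2 + u ^ 2) ^ (-(s / 4)))
      = ENNReal.ofReal (h ^ (1 - s / 2)) * ∫⁻ u : ℝ, ENNReal.ofReal ((1 + u ^ 2) ^ (-(s / 4))) := by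
  have himg : (fun u : ℝ => h * u) '' univ = univ := by
    rw [image_univ, range_eq_univ]
    intro v
    exact ⟨v / h, by field_simp⟩
  have := lintegral_image_eq_lintegral_abs_deriv_mul (s := univ) (f := fun u : ℝ => h * u)
    (f' := fun _ => h) MeasurableSet.univ
    (fun x _ => by simpa using (hasDerivAt_id x).const_mul h)
    (fun x _ y _ hxy => mul_left_cancel₀ hh.ne' hxy)
    (fun u => ENNReal.ofReal ((h ^ 2 + u ^ 2) ^ (-(s / 4))))
  rw [himg] at this
  simp only [Measure.restrict_univ] at this
  rw [this, ← lintegral_const_mul' _ _ ENNReal.ofReal_ne_top]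
  congr 1
  ext u
  rw [← ENNReal.ofReal_mul (abs_nonneg _), ← ENNReal.ofReal_mul (by positivity), abs_of_pos hh]
  congr 1
  rw [show h ^ 2 + (h * u) ^ 2 = h ^ 2 * (1 + u ^ 2) by ring,
    Real.mul_rpow (by positivity) (by positivity), ← mul_assoc]
  congr 1
  rw [← Real.rpow_natCast, ← Real.rpow_mul hh.le]
  nth_rewrite 1 [← Real.rpow_one h]
  rw [← Real.rpow_add hh]
  congr 1
  push_cast
  ring

lemma lintegral_fin (s : ℝ) (hs : 2 < s) :
    ∫⁻ u : ℝ, ENNReal.ofReal ((1 + u ^ 2) ^ (-(s / 4))) ≠ ⊤ := by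
  have h := integrable_rpow_neg_one_add_norm_sq (E := ℝ) (μ := volume) (r := s / 2)
    (by simp; linarith)
  have h2 := h.lintegral_lt_top
  refine ne_of_lt (lt_of_le_of_lt (le_of_eq ?_) h2)
  congr 1
  ext u
  rw [Real.norm_eq_abs, sq_abs]
  congr 2
  ring

lemma amp (b β h : ℝ) (hb : 1 < b) (hβ : 0 < β) (hh : 0 < h) (hh2 : h ≤ 1 / (2 * b ^ 2)) :
    ∃ m : ℕ, ∀ j, m ≤ j → j ≤ m + 2 →
      2 * h ^ β / b ^ 3 ≤ 2 * b ^ (-β * (j : ℝ)) * Real.sin (Real.pi * (b ^ j * h)) := by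
  have hb0 : 0 < b := by linarith
  have hb2 : b ^ 2 ≤ 1 / (2 * h) := by
    rw [le_div_iff₀ (by positivity)] at hh2 ⊢; linarith
  have h1 : 1 ≤ 1 / (2 * h) := le_trans (one_le_pow₀ hb.le) hb2
  obtain ⟨n, hn1, hn2⟩ := exists_nat_pow_near h1 hb
  have hn : 2 < n + 1 := (pow_lt_pow_iff_right₀ hb).1 (lt_of_le_of_lt hb2 hn2)
  obtain ⟨m, rfl⟩ : ∃ m, n = m + 2 := ⟨n - 2, by omega⟩
  refine ⟨m, fun j hj1 hj2 => ?_⟩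
  have e1 : b ^ j ≤ 1 / (2 * h) := le_trans (pow_le_pow_right₀ hb.le hj2) hn1
  have e2 : 1 / (2 * h) < b ^ j * b ^ 3 := by
    refine lt_of_lt_of_le hn2 ?_
    rw [← pow_add]
    exact pow_le_pow_right₀ hb.le (by omega)
  have e3 : b ^ j * h ≤ 1 / 2 := by
    rw [le_div_iff₀ (by positivity)] at e1; linarith
  have e4 : 1 / b ^ 3 ≤ 2 * (b ^ j * h) := by
    rw [div_lt_iff₀ (by positivity)] at e2
    rw [div_le_iff₀ (by positivity)]; nlinarith
  have hsin : 2 * (b ^ j * h) ≤ Real.sin (Real.pi * (b ^ j * h)) := by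
    have := Real.mul_le_sin (x := Real.pi * (b ^ j * h)) (by positivity)
      (by nlinarith [Real.pi_pos])
    calc _ = 2 / Real.pi * (Real.pi * (b ^ j * h)) := by field_simp
      _ ≤ _ := this
  have hpow : h ^ β ≤ b ^ (-β * (j : ℝ)) := by
    rw [mul_comm, Real.rpow_mul hb0.le, Real.rpow_natCast, Real.rpow_neg (by positivity),
      le_inv_comm₀ (by positivity) (by positivity), ← Real.inv_rpow hh.le]
    apply Real.rpow_le_rpow (by positivity) _ hβ.le
    refine e1.trans ?_
    rw [one_div]
    exact inv_anti₀ hh (by linarith)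
  calc 2 * h ^ β / b ^ 3 = 2 * h ^ β * (1 / b ^ 3) := by ring
    _ ≤ _ := by
      gcongr
      exact e4.trans hsin

lemma summ_b (b β : ℝ) (hb : 1 < b) (hβ : 0 < β) :
    Summable fun n : ℕ => b ^ (-β * (n : ℝ)) := by
  have hb0 : 0 < b := by linarith
  have : (fun n : ℕ => b ^ (-β * (n : ℝ))) = fun n : ℕ => (b ^ (-β)) ^ n := by
    ext n; rw [Real.rpow_mul hb0.le, Real.rpow_natCast]
  rw [this]
  exact summable_geometric_of_lt_one (by positivity)
    (Real.rpow_lt_one_of_one_lt_of_neg hb (by linarith))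

/-- amplitude sequence -/
noncomputable def ampl (b β x y : ℝ) (n : ℕ) : ℝ :=
  2 * b ^ (-β * (n : ℝ)) * Real.sin (Real.pi * (b ^ n * (x - y)))

lemma summ_ampl (b β x y : ℝ) (hb : 1 < b) (hβ : 0 < β) : Summable fun n => |ampl b β x y n| := by
  refine Summable.of_nonneg_of_le (fun _ => abs_nonneg _) (fun n => ?_)
    ((summ_b b β hb hβ).mul_left 2)
  have hb0 : 0 < b := by linarith
  unfold ampl
  rw [abs_mul, abs_of_pos (by positivity : 0 < 2 * b ^ (-β * (n : ℝ)))]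
  exact mul_le_of_le_one_right (by positivity) (Real.abs_sin_le_one _)

lemma abs_ampl (b β x y : ℝ) (hb : 1 < b) (n : ℕ) :
    2 * b ^ (-β * (n : ℝ)) * Real.sin (Real.pi * (b ^ n * |x - y|)) ≤ |ampl b β x y n| := by
  have hb0 : 0 < b := by linarith
  unfold ampl
  rw [abs_mul, abs_of_pos (by positivity : 0 < 2 * b ^ (-β * (n : ℝ)))]
  gcongr
  rcases abs_choice (x - y) with h | h <;> rw [h]
  · exact le_abs_self _
  · rw [mul_neg, mul_neg, Real.sin_neg]; exact neg_le_abs _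

lemma W1_diff (b β x y : ℝ) (hb : 1 < b) (hβ : 0 < β) (Θ : ℕ → ℝ) :
    W1 b β Θ x - W1 b β Θ y = rser (fun n => -ampl b β x y n)
      (fun n => Real.pi * (b ^ n * (x + y))) Θ := by
  have hb0 : 0 < b := by linarith
  have hs : ∀ t, Summable fun n : ℕ =>
      b ^ (-β * (n : ℝ)) * Real.cos (2 * Real.pi * (b ^ n * t + Θ n)) := fun t =>
    Summable.of_norm_bounded (summ_b b β hb hβ) (fun n => by
      rw [norm_mul, Real.norm_of_nonneg (by positivity)]
      exact mul_le_of_le_one_right (by positivity) (Real.abs_cos_le_one _))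
  unfold W1 rser ampl
  rw [← (hs x).tsum_sub (hs y)]
  apply tsum_congr
  intro n
  rw [← mul_sub, Real.cos_sub_cos]
  rw [show (2 * Real.pi * (b ^ n * x + Θ n) + 2 * Real.pi * (b ^ n * y + Θ n)) / 2
    = 2 * Real.pi * Θ n + Real.pi * (b ^ n * (x + y)) by ring,
    show (2 * Real.pi * (b ^ n * x + Θ n) - 2 * Real.pi * (b ^ n * y + Θ n)) / 2
    = Real.pi * (b ^ n * (x - y)) by ring]
  ring

lemma W2_diff (b β x y : ℝ) (hb : 1 < b) (hβ : 0 < β) (Θ : ℕ → ℝ) :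
    W2 b β Θ x - W2 b β Θ y = rser (fun n => ampl b β x y n)
      (fun n => Real.pi * (b ^ n * (x + y)) + Real.pi / 2) Θ := by
  have hb0 : 0 < b := by linarith
  have hs : ∀ t, Summable fun n : ℕ =>
      b ^ (-β * (n : ℝ)) * Real.sin (2 * Real.pi * (b ^ n * t + Θ n)) := fun t =>
    Summable.of_norm_bounded (summ_b b β hb hβ) (fun n => by
      rw [norm_mul, Real.norm_of_nonneg (by positivity)]
      exact mul_le_of_le_one_right (by positivity) (Real.abs_sin_le_one _))
  unfold W2 rser ampl
  rw [← (hs x).tsum_sub (hs y)]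
  apply tsum_congr
  intro n
  rw [← mul_sub, Real.sin_sub_sin, ← add_assoc, Real.sin_add_pi_div_two]
  rw [show (2 * Real.pi * (b ^ n * x + Θ n) + 2 * Real.pi * (b ^ n * y + Θ n)) / 2
    = 2 * Real.pi * Θ n + Real.pi * (b ^ n * (x + y)) by ring,
    show (2 * Real.pi * (b ^ n * x + Θ n) - 2 * Real.pi * (b ^ n * y + Θ n)) / 2
    = Real.pi * (b ^ n * (x - y)) by ring]
  ring

lemma split_pow (h u v s : ℝ) (hh : 0 < h) (hs : 0 < s) :
    (h ^ 2 + (u ^ 2 + v ^ 2)) ^ (-(s / 2)) ≤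
      (h ^ 2 + u ^ 2) ^ (-(s / 4)) * (h ^ 2 + v ^ 2) ^ (-(s / 4)) := by
  rw [← Real.mul_rpow (by positivity) (by positivity),
    show (-(s / 2)) = (2 : ℕ) * (-(s / 4)) by push_cast; ring,
    Real.rpow_mul (by positivity), Real.rpow_natCast]
  apply Real.rpow_le_rpow_of_nonpos (by positivity) _ (by linarith)
  nlinarith [sq_nonneg h, sq_nonneg u, sq_nonneg v, mul_nonneg (sq_nonneg h) (sq_nonneg u),
    mul_nonneg (sq_nonneg h) (sq_nonneg v), mul_nonneg (sq_nonneg u) (sq_nonneg v)]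


/-- there is `C₀ > 0` (depending only on `b`, `β`, `s`) such that for all
`x, y ∈ [0,1]` with `0 < |x-y| ≤ 1/(2b²)`,
`E[((x-y)² + |f(x)-f(y)|²)^{-s/2}] ≤ C₀ |x-y|^{2-s-2β}`. -/
theorem stmt_9 (b β s : ℝ) (hb : 1 < b) (hβ : β ∈ Set.Ioo (0 : ℝ) (1 / 2))
    (hs : s ∈ Set.Ioo (2 : ℝ) (3 - 2 * β))
    (μ : Measure (ℕ → ℝ)) (hμ : IsUniformProductMeasure μ) :
    ∃ C₀ > (0 : ℝ), ∀ x ∈ Set.Icc (0 : ℝ) 1, ∀ y ∈ Set.Icc (0 : ℝ) 1,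
      0 < |x - y| → |x - y| ≤ 1 / (2 * b ^ 2) →
      (∫⁻ p, ENNReal.ofReal
          (((x - y) ^ 2 + (Wdist b β p.1 p.2 x y) ^ 2) ^ (-(s / 2))) ∂ μ.prod μ)
        ≤ ENNReal.ofReal (C₀ * |x - y| ^ (2 - s - 2 * β)) := by
  obtain ⟨hβ0, hβ1⟩ := hβ
  obtain ⟨hs0, hs1⟩ := hs
  have := uniform_prob hμ
  obtain ⟨M, hMt, hM⟩ := lintegral_wgt
  have hb0 : 0 < b := by linarith
  set A := ∫⁻ u : ℝ, ENNReal.ofReal ((1 + u ^ 2) ^ (-(s / 4))) with hA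
  have hAt : A ≠ ⊤ := lintegral_fin s hs0
  set D : ENNReal := 3 * (M * M * A) with hD
  have hDt : D ≠ ⊤ := ENNReal.mul_ne_top (by simp) (ENNReal.mul_ne_top (ENNReal.mul_ne_top hMt hMt) hAt)
  refine ⟨(D.toReal * (2 * b ^ 3)) ^ 2 + 1, by positivity, ?_⟩
  intro x _ y _ hxy hxy2
  set h := |x - y| with hh
  have hsq : (x - y) ^ 2 = h ^ 2 := by rw [hh, sq_abs]
  obtain ⟨m, hm⟩ := amp b β h hb hβ0 hxy hxy2
  have hκ : 0 < 2 * h ^ β / b ^ 3 := by positivity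
  have hamp : ∀ j, m ≤ j → j ≤ m + 2 → 2 * h ^ β / b ^ 3 ≤ |ampl b β x y j| :=
    fun j h1 h2 => (hm j h1 h2).trans (abs_ampl b β x y hb j)
  let φ : ℝ → ENNReal := fun u => ENNReal.ofReal ((h ^ 2 + u ^ 2) ^ (-(s / 4)))
  have hφ : Measurable φ := by fun_prop
  have hbd : ∀ q r : ℕ → ℝ, (∀ n, |q n| = |ampl b β x y n|) →
      ∫⁻ Θ, φ (rser q r Θ) ∂μ ≤
        ENNReal.ofReal (D.toReal * (2 * b ^ 3) * h ^ (1 - s / 2 - β)) := by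
    intro q r hq
    have hsum : Summable fun n => |q n| := by
      simp only [hq]; exact summ_ampl b β x y hb hβ0
    refine (rser_main hμ hMt hM r hsum m (m + 1) (m + 2) (by omega) (by omega) (by omega)
      _ hκ (by rw [hq]; exact hamp _ (by omega) (by omega))
      (by rw [hq]; exact hamp _ (by omega) (by omega))
      (by rw [hq]; exact hamp _ (by omega) (by omega)) φ hφ).trans (le_of_eq ?_)
    simp only [φ]
    rw [lintegral_scale h s hxy, ← hA]
    rw [mul_assoc D.toReal, ENNReal.ofReal_mul ENNReal.toReal_nonneg, ENNReal.ofReal_toReal hDt, hD]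
    rw [show 2 * b ^ 3 * h ^ (1 - s / 2 - β) = 4 / (2 * h ^ β / b ^ 3) * h ^ (1 - s / 2) by
      rw [Real.rpow_sub hxy]; field_simp; norm_num]
    rw [ENNReal.ofReal_mul (by positivity)]
    ring
  have hX := rser_meas (q := fun n => -ampl b β x y n) (fun n => Real.pi * (b ^ n * (x + y)))
    (by simpa using summ_ampl b β x y hb hβ0)
  have hY := rser_meas (q := fun n => ampl b β x y n)
    (fun n => Real.pi * (b ^ n * (x + y)) + Real.pi / 2) (summ_ampl b β x y hb hβ0)
  have h1 := hbd (fun n => -ampl b β x y n) (fun n => Real.pi * (b ^ n * (x + y))) (by simp)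
  have h2 := hbd (fun n => ampl b β x y n) (fun n => Real.pi * (b ^ n * (x + y)) + Real.pi / 2)
    (by simp)
  calc _ ≤ ∫⁻ p : (ℕ → ℝ) × (ℕ → ℝ), φ (rser (fun n => -ampl b β x y n)
        (fun n => Real.pi * (b ^ n * (x + y))) p.1) * φ (rser (fun n => ampl b β x y n)
        (fun n => Real.pi * (b ^ n * (x + y)) + Real.pi / 2) p.2) ∂ μ.prod μ := by
        apply lintegral_mono
        intro p
        simp only [φ]
        rw [← ENNReal.ofReal_mul (by positivity)]
        apply ENNReal.ofReal_le_ofReal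
        unfold Wdist
        rw [Real.sq_sqrt (by positivity), hsq, W1_diff b β x y hb hβ0, W2_diff b β x y hb hβ0]
        exact split_pow _ _ _ _ hxy (by linarith)
    _ = _ := lintegral_prod_mul (hφ.comp hX).aemeasurable (hφ.comp hY).aemeasurable
    _ ≤ _ := mul_le_mul' h1 h2
    _ ≤ _ := by
        rw [← ENNReal.ofReal_mul (by positivity)]
        apply ENNReal.ofReal_le_ofReal
        have e : h ^ (2 - s - 2 * β) = h ^ (1 - s / 2 - β) * h ^ (1 - s / 2 - β) := by
          rw [← Real.rpow_add hxy]; congr 1; ring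
        rw [e]
        have : 0 ≤ h ^ (1 - s / 2 - β) * h ^ (1 - s / 2 - β) := by positivity
        nlinarith
end

section
/- Let b > 1 and β ∈ (0, 1/2). There exists a constant C₃ > 0, depending only on b and β, such that for all x, y ∈ [0,1] with 0 < |x − y| ≤ 1/(2b²), the real random variable X₁(Θ) = Σ_{n=0}^∞ 2 b^{−βn} sin(π bⁿ(x + y) + 2πθ_n) sin(π bⁿ(y − x)), where Θ = (θ_n) is a sequence of i.i.d. uniform random variables on [0,1], has a probability density function h_{X₁} : ℝ → [0, ∞) with respect to Lebesgue measure satisfying h_{X₁}(t) ≤ C₃ |x − y|^{−β} for all t ∈ ℝ. -/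
open MeasureTheory

noncomputable def ap (a x : ℝ) : ENNReal :=
  ENNReal.ofReal (√((Real.pi * √(a ^ 2 - x ^ 2))⁻¹))

lemma ap_meas (a : ℝ) : Measurable (ap a) := by
  unfold ap
  fun_prop

lemma sqrt_g (a t : ℝ) :
    √(a ^ 2 - (a * Real.cos (2 * Real.pi * t)) ^ 2) = |a| * |Real.sin (2 * Real.pi * t)| := by
  rw [← abs_mul, ← Real.sqrt_sq_eq_abs]
  congr 1
  have := Real.sin_sq_add_cos_sq (2 * Real.pi * t)
  rw [mul_pow, mul_pow]
  linear_combination (-a ^ 2) * this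

lemma g_deriv (a t : ℝ) : HasDerivAt (fun t => a * Real.cos (2 * Real.pi * t))
    (-(2 * Real.pi * a * Real.sin (2 * Real.pi * t))) t := by
  have h1 : HasDerivAt (fun t : ℝ => 2 * Real.pi * t) (2 * Real.pi) t := by
    simpa using (hasDerivAt_id t).const_mul (2 * Real.pi)
  have := (h1.cos).const_mul a
  refine this.congr_deriv ?_
  ring

lemma branch (a : ℝ) (ha : a ≠ 0) (s : Set ℝ) (hs : MeasurableSet s)
    (h0 : ∀ t ∈ s, Real.sin (2 * Real.pi * t) ≠ 0)
    (hi : Set.InjOn (fun t => Real.cos (2 * Real.pi * t)) s) (u : ℝ → ENNReal) :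
    ∫⁻ t in s, 2 * u (a * Real.cos (2 * Real.pi * t)) ≤ ∫⁻ x, ap a x ^ 2 * u x := by
  have hinj : Set.InjOn (fun t => a * Real.cos (2 * Real.pi * t)) s := by
    intro t ht t' ht' h
    exact hi ht ht' (mul_left_cancel₀ ha h)
  have key := lintegral_image_eq_lintegral_abs_deriv_mul hs
    (fun t _ => (g_deriv a t).hasDerivWithinAt) hinj (fun x => ap a x ^ 2 * u x)
  calc _ = ∫⁻ t in s, ENNReal.ofReal |(-(2 * Real.pi * a * Real.sin (2 * Real.pi * t)))| *
        (ap a (a * Real.cos (2 * Real.pi * t)) ^ 2 * u (a * Real.cos (2 * Real.pi * t))) := by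
        refine setLIntegral_congr_fun hs fun t ht => ?_
        rw [← mul_assoc]
        congr 1
        unfold ap
        rw [sqrt_g, ← ENNReal.ofReal_pow (by positivity), Real.sq_sqrt (by positivity),
          ← ENNReal.ofReal_mul (by positivity)]
        have h1 := abs_pos.2 (h0 t ht)
        have h2 := abs_pos.2 ha
        have : |(-(2 * Real.pi * a * Real.sin (2 * Real.pi * t)))| *
          (Real.pi * (|a| * |Real.sin (2 * Real.pi * t)|))⁻¹ = 2 := by
          rw [abs_neg, abs_mul, abs_mul, abs_of_pos Real.two_pi_pos]
          have := Real.pi_pos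
          field_simp
        rw [this]; simp
    _ = _ := key.symm
    _ ≤ _ := setLIntegral_le_lintegral _ _

lemma sin_pos_half {t : ℝ} (ht : t ∈ Set.Ioo (0 : ℝ) (1 / 2)) : 0 < Real.sin (2 * Real.pi * t) := by
  have := Real.pi_pos
  apply Real.sin_pos_of_pos_of_lt_pi
  · exact mul_pos (by positivity) ht.1
  · nlinarith [ht.2]

lemma cos_inj1 : Set.InjOn (fun t => Real.cos (2 * Real.pi * t)) (Set.Ioo (0 : ℝ) (1 / 2)) := by
  have hp := Real.pi_pos
  intro t ht t' ht' h
  have := Real.injOn_cos (x₁ := 2 * Real.pi * t) (x₂ := 2 * Real.pi * t')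
    ⟨mul_nonneg (by positivity) ht.1.le, by nlinarith [ht.2]⟩
    ⟨mul_nonneg (by positivity) ht'.1.le, by nlinarith [ht'.2]⟩ h
  exact mul_left_cancel₀ (by positivity) this

lemma arc_le (a φ : ℝ) (ha : a ≠ 0) (u : ℝ → ENNReal) :
    ∫⁻ t in Set.Icc (0 : ℝ) 1, u (a * Real.sin (φ + 2 * Real.pi * t)) ≤
      ∫⁻ x, ap a x ^ 2 * u x := by
  have hp := Real.pi_pos
  set H : ℝ → ENNReal := fun t => u (a * Real.cos (2 * Real.pi * t)) with hH
  set s : ℝ := φ / (2 * Real.pi) - 1 / 4 with hs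
  have e1 : ∀ t, u (a * Real.sin (φ + 2 * Real.pi * t)) = H (t + s) := by
    intro t
    simp only [hH]
    rw [← Real.cos_sub_pi_div_two]
    congr 3
    rw [hs]; field_simp; ring
  have e2 : ∫⁻ t in Set.Ioc (0 : ℝ) 1, H (t + s) = ∫⁻ t in Set.Ioc s (s + 1), H t := by
    have := (measurePreserving_add_right (volume : Measure ℝ) s).setLIntegral_comp_preimage_emb
      (MeasurableEquiv.addRight s).measurableEmbedding H (Set.Ioc s (s + 1))
    rw [← this]
    congr 2
    ext t; simp [add_comm]
  have e3 : ∫⁻ t in Set.Ioc s (s + 1), H t = ∫⁻ t in Set.Ioc 0 (0 + 1), H t := by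
    refine (isAddFundamentalDomain_Ioc one_pos s volume).setLIntegral_eq
      (isAddFundamentalDomain_Ioc one_pos 0 volume) H ?_
    rintro ⟨g, hg⟩ x
    obtain ⟨n, rfl⟩ := AddSubgroup.mem_zmultiples_iff.1 hg
    simp only [hH, AddSubgroup.mk_vadd, vadd_eq_add, zsmul_eq_mul, mul_one]
    congr 2
    rw [← Real.cos_add_int_mul_two_pi (2 * Real.pi * x) n]
    congr 1; ring
  have e4 : ∫⁻ t in Set.Ioc (0 : ℝ) 1, H t =
      (∫⁻ t in Set.Ioo (0 : ℝ) (1 / 2), H t) + ∫⁻ t in Set.Ioo (1 / 2 : ℝ) 1, H t := by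
    rw [← Set.Ioc_union_Ioc_eq_Ioc (b := (1 / 2 : ℝ)) (by norm_num) (by norm_num),
      lintegral_union measurableSet_Ioc (Set.Ioc_disjoint_Ioc_of_le le_rfl),
      setLIntegral_congr Ioo_ae_eq_Ioc.symm, setLIntegral_congr Ioo_ae_eq_Ioc.symm]
  have b1 := branch a ha (Set.Ioo 0 (1 / 2)) measurableSet_Ioo
    (fun t ht => (sin_pos_half ht).ne') cos_inj1 u
  have hr : ∀ t ∈ Set.Ioo (1 / 2 : ℝ) 1, 1 - t ∈ Set.Ioo (0 : ℝ) (1 / 2) := by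
    intro t ht; constructor <;> linarith [ht.1, ht.2]
  have b2 := branch a ha (Set.Ioo (1 / 2) 1) measurableSet_Ioo
    (fun t ht => by
      have := sin_pos_half (hr t ht)
      rw [show 2 * Real.pi * (1 - t) = 2 * Real.pi - 2 * Real.pi * t by ring,
        Real.sin_two_pi_sub] at this
      linarith)
    (fun t ht t' ht' h => by
      have := cos_inj1 (hr t ht) (hr t' ht') (by
        simp only at h ⊢
        rw [show 2 * Real.pi * (1 - t) = 2 * Real.pi - 2 * Real.pi * t by ring,
          show 2 * Real.pi * (1 - t') = 2 * Real.pi - 2 * Real.pi * t' by ring,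
          Real.cos_two_pi_sub, Real.cos_two_pi_sub, h])
      linarith) u
  rw [lintegral_const_mul' _ _ (by simp)] at b1 b2
  rw [setLIntegral_congr Ioc_ae_eq_Icc.symm]
  simp_rw [e1]
  rw [e2, e3, zero_add, e4]
  have h2 : (2 : ENNReal) ≠ 0 := by simp
  refine (ENNReal.mul_le_mul_iff_right h2 (by simp)).1 ?_
  rw [mul_add]
  calc _ ≤ _ := add_le_add b1 b2
    _ = _ := (two_mul _).symm

noncomputable def cc : ENNReal :=
  ∫⁻ t in Set.Ioo (0 : ℝ) (1 / 2), 2 * ENNReal.ofReal (√((Real.pi * Real.sin (2 * Real.pi * t))⁻¹))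

lemma ap_zero (a x : ℝ) (h : |a| ≤ |x|) : ap a x = 0 := by
  unfold ap
  rw [Real.sqrt_eq_zero_of_nonpos (x := a ^ 2 - x ^ 2)]
  · simp
  · linarith [sq_le_sq.2 h]

lemma ap_cube (a : ℝ) (ha : a ≠ 0) :
    ∫⁻ x, ap a x ^ 3 ≤ ENNReal.ofReal (√(|a|⁻¹)) * cc := by
  have hp := Real.pi_pos
  have hinj : Set.InjOn (fun t => a * Real.cos (2 * Real.pi * t)) (Set.Ioo 0 (1 / 2)) := by
    intro t ht t' ht' h
    exact cos_inj1 ht ht' (mul_left_cancel₀ ha h)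
  have key := lintegral_image_eq_lintegral_abs_deriv_mul measurableSet_Ioo
    (fun t _ => (g_deriv a t).hasDerivWithinAt) hinj (fun x => ap a x ^ 3)
  have hsub : Function.support (fun x => ap a x ^ 3) ⊆
      (fun t => a * Real.cos (2 * Real.pi * t)) '' (Set.Ioo 0 (1 / 2)) := by
    intro x hx
    have hx : |x| < |a| := by
      by_contra h
      exact hx (by simp [ap_zero a x (not_lt.1 h)])
    have h1 : |x / a| < 1 := by rw [abs_div]; exact (div_lt_one (abs_pos.2 ha)).2 hx
    rw [abs_lt] at h1
    refine ⟨Real.arccos (x / a) / (2 * Real.pi), ⟨?_, ?_⟩, ?_⟩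
    · exact div_pos (Real.arccos_pos.2 h1.2) (by positivity)
    · have : Real.arccos (x / a) < Real.pi := by
        refine lt_of_le_of_ne (Real.arccos_le_pi _) fun h => ?_
        rw [Real.arccos_eq_pi] at h
        linarith
      rw [div_lt_iff₀ (by positivity)]
      linarith
    · simp only
      rw [mul_div_cancel₀ _ (by positivity), Real.cos_arccos h1.1.le h1.2.le]
      field_simp
  rw [← setLIntegral_eq_of_support_subset hsub, key, cc, ← lintegral_const_mul' _ _ (by simp)]
  refine le_of_eq (setLIntegral_congr_fun measurableSet_Ioo fun t ht => ?_)
  have h1 := sin_pos_half ht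
  have h2 := abs_pos.2 ha
  unfold ap
  rw [sqrt_g, abs_of_pos h1, ← ENNReal.ofReal_pow (by positivity),
    ← ENNReal.ofReal_mul (by positivity), show (2 : ENNReal) = ENNReal.ofReal 2 by simp,
    ← ENNReal.ofReal_mul (by positivity), ← ENNReal.ofReal_mul (by positivity)]
  congr 1
  rw [abs_neg, abs_mul, abs_mul, abs_of_pos Real.two_pi_pos, abs_of_pos h1, pow_succ,
    Real.sq_sqrt (by positivity), show Real.pi * (|a| * Real.sin (2 * Real.pi * t)) =
      |a| * (Real.pi * Real.sin (2 * Real.pi * t)) by ring, mul_inv (|a|),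
      Real.sqrt_mul (by positivity)]
  field_simp

lemma cc_lt : cc < ⊤ := by
  have hp := Real.pi_pos
  have i1 : IntervalIntegrable (fun x : ℝ => x ^ (-1/2 : ℝ)) volume 0 (1 / 2) :=
    intervalIntegral.intervalIntegrable_rpow' (by norm_num)
  have i2 : IntervalIntegrable (fun x : ℝ => (1 / 2 - x) ^ (-1/2 : ℝ)) volume 0 (1 / 2) := by
    have := (i1.comp_sub_left (1 / 2)).symm
    simpa using this
  have i3 := (i1.add i2).1
  have i4 : IntegrableOn _ (Set.Ioo (0 : ℝ) (1 / 2)) volume := i3.mono_set Set.Ioo_subset_Ioc_self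
  unfold cc
  rw [lintegral_const_mul' _ _ (by simp)]
  refine ENNReal.mul_lt_top (by simp) (lt_of_le_of_lt ?_ i4.lintegral_lt_top)
  refine setLIntegral_mono' measurableSet_Ioo fun t ht => ENNReal.ofReal_le_ofReal ?_
  have key : ∀ r : ℝ, 0 < r → r ≤ 1 / 4 → √((Real.pi * Real.sin (2 * Real.pi * r))⁻¹) ≤
      r ^ (-1/2 : ℝ) := by
    intro r hr hr'
    have h := Real.mul_le_sin (x := 2 * Real.pi * r) (by positivity) (by nlinarith)
    have h2 : 2 / Real.pi * (2 * Real.pi * r) = 4 * r := by field_simp; ring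
    rw [show (-1/2 : ℝ) = -(1/2) by norm_num, Real.rpow_neg hr.le, ← Real.sqrt_eq_rpow,
      ← Real.sqrt_inv]
    apply Real.sqrt_le_sqrt
    apply inv_anti₀ hr
    nlinarith [Real.pi_gt_three]
  have n1 : 0 ≤ t ^ (-1/2 : ℝ) := Real.rpow_nonneg ht.1.le _
  have n2 : 0 ≤ (1 / 2 - t) ^ (-1/2 : ℝ) := Real.rpow_nonneg (by linarith [ht.2]) _
  try simp only [Pi.add_apply]
  rcases le_total t (1 / 4) with h | h
  · linarith [key t ht.1 h]
  · have := key (1 / 2 - t) (by linarith [ht.2]) (by linarith)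
    rw [show 2 * Real.pi * (1 / 2 - t) = Real.pi - 2 * Real.pi * t by ring, Real.sin_pi_sub] at this
    linarith

lemma amgm (p q r : ENNReal) :
    p ^ 2 * (q ^ 2 * r ^ 2) ≤ p ^ 3 * q ^ 3 + q ^ 3 * r ^ 3 + p ^ 3 * r ^ 3 := by
  have c1 : ∀ p q r : ENNReal, p ≤ q → p ≤ r → p ^ 2 * (q ^ 2 * r ^ 2) ≤ q ^ 3 * r ^ 3 := by
    intro p q r h1 h2
    calc p ^ 2 * (q ^ 2 * r ^ 2) = q ^ 2 * r ^ 2 * (p * p) := by ring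
        _ ≤ q ^ 2 * r ^ 2 * (q * r) := by gcongr
        _ = q ^ 3 * r ^ 3 := by ring
  have cp : p ≤ q → p ≤ r → p ^ 2 * (q ^ 2 * r ^ 2) ≤
      p ^ 3 * q ^ 3 + q ^ 3 * r ^ 3 + p ^ 3 * r ^ 3 := fun h1 h2 =>
    (c1 p q r h1 h2).trans (le_trans le_add_self le_self_add)
  have cq : q ≤ p → q ≤ r → p ^ 2 * (q ^ 2 * r ^ 2) ≤
      p ^ 3 * q ^ 3 + q ^ 3 * r ^ 3 + p ^ 3 * r ^ 3 := fun h1 h2 => by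
    have := c1 q p r h1 h2
    rw [mul_left_comm] at this
    exact this.trans le_add_self
  have cr : r ≤ p → r ≤ q → p ^ 2 * (q ^ 2 * r ^ 2) ≤
      p ^ 3 * q ^ 3 + q ^ 3 * r ^ 3 + p ^ 3 * r ^ 3 := fun h1 h2 => by
    have := c1 r p q h1 h2
    rw [mul_comm, mul_assoc] at this
    exact this.trans (le_trans le_self_add le_self_add)
  rcases le_total p q with h1 | h1
  · rcases le_total p r with h3 | h3
    · exact cp h1 h3
    · exact cr h3 (h3.trans h1)
  · rcases le_total q r with h3 | h3
    · exact cq h1 h3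
    · exact cr (h3.trans h1) h3

lemma tri1 (p q U : ℝ → ENNReal) (hp : Measurable p) (hq : Measurable q) (hU : Measurable U) (s : ℝ) :
    ∫⁻ x, ∫⁻ y, ∫⁻ z, p x * q y * U (s + x + y + z) =
      (∫⁻ x, p x) * (∫⁻ x, q x) * ∫⁻ x, U x := by
  have h1 : ∀ x y, ∫⁻ z, U (s + x + y + z) = ∫⁻ z, U z := fun x y =>
    lintegral_add_left_eq_self U (s + x + y)

  · have h2 : ∀ x y, ∫⁻ z, p x * q y * U (s + x + y + z) = p x * q y * ∫⁻ z, U z := by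
      intro x y
      rw [lintegral_const_mul _ (by fun_prop), h1]
    simp_rw [h2]
    have h3 : ∀ x, ∫⁻ y, p x * q y * ∫⁻ z, U z = p x * (∫⁻ y, q y) * ∫⁻ z, U z := by
      intro x
      rw [lintegral_mul_const _ (by fun_prop), lintegral_const_mul _ hq]
    simp_rw [h3]
    rw [lintegral_mul_const _ (by fun_prop), lintegral_mul_const _ hp]


lemma tri (p q r U : ℝ → ENNReal) (hp : Measurable p) (hq : Measurable q) (hr : Measurable r)
    (hU : Measurable U) (s : ℝ) :
    ∫⁻ x, p x ^ 2 * ∫⁻ y, q y ^ 2 * ∫⁻ z, r z ^ 2 * U (s + x + y + z) ≤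
      ((∫⁻ x, p x ^ 3) * (∫⁻ x, q x ^ 3) + (∫⁻ x, q x ^ 3) * (∫⁻ x, r x ^ 3) +
        (∫⁻ x, p x ^ 3) * (∫⁻ x, r x ^ 3)) * ∫⁻ x, U x := by
  have e : ∫⁻ x, p x ^ 2 * ∫⁻ y, q y ^ 2 * ∫⁻ z, r z ^ 2 * U (s + x + y + z) =
      ∫⁻ x, ∫⁻ y, ∫⁻ z, p x ^ 2 * (q y ^ 2 * r z ^ 2) * U (s + x + y + z) := by
    refine lintegral_congr fun x => ?_
    rw [← lintegral_const_mul _ (by fun_prop)]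
    refine lintegral_congr fun y => ?_
    rw [← lintegral_const_mul _ (by fun_prop), ← lintegral_const_mul _ (by fun_prop)]
    refine lintegral_congr fun z => ?_
    ring
  rw [e]
  have t1 := tri1 (fun x => p x ^ 3) (fun x => q x ^ 3) U (by fun_prop) (by fun_prop) hU s
  have t2 : ∫⁻ x, ∫⁻ y, ∫⁻ z, q y ^ 3 * r z ^ 3 * U (s + x + y + z) =
      (∫⁻ x, q x ^ 3) * (∫⁻ x, r x ^ 3) * ∫⁻ x, U x := by
    rw [← tri1 (fun x => q x ^ 3) (fun x => r x ^ 3) U (by fun_prop) (by fun_prop) hU s]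
    rw [lintegral_lintegral_swap (by fun_prop)]
    refine lintegral_congr fun y => ?_
    rw [lintegral_lintegral_swap (by fun_prop)]
    refine lintegral_congr fun z => lintegral_congr fun x => ?_
    congr 2; ring
  have t3 : ∫⁻ x, ∫⁻ y, ∫⁻ z, p x ^ 3 * r z ^ 3 * U (s + x + y + z) =
      (∫⁻ x, p x ^ 3) * (∫⁻ x, r x ^ 3) * ∫⁻ x, U x := by
    rw [← tri1 (fun x => p x ^ 3) (fun x => r x ^ 3) U (by fun_prop) (by fun_prop) hU s]
    refine lintegral_congr fun x => ?_
    rw [lintegral_lintegral_swap (by fun_prop)]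
    refine lintegral_congr fun z => lintegral_congr fun y => ?_
    congr 2; ring
  rw [add_mul, add_mul, ← t1, ← t2, ← t3]
  rw [← lintegral_add_left (by fun_prop), ← lintegral_add_left (by fun_prop)]
  refine lintegral_mono fun x => ?_
  rw [← lintegral_add_left (by fun_prop), ← lintegral_add_left (by fun_prop)]
  refine lintegral_mono fun y => ?_
  rw [← lintegral_add_left (by fun_prop), ← lintegral_add_left (by fun_prop)]
  refine lintegral_mono fun z => ?_
  simp only
  rw [← add_mul, ← add_mul]
  gcongr
  exact amgm _ _ _

instance prob01 : IsProbabilityMeasure (volume.restrict (Set.Icc (0 : ℝ) 1)) :=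
  ⟨by simp⟩

lemma unif_prob (μ : Measure (ℕ → ℝ)) (hμ : IsUniformProductMeasure μ) :
    IsProbabilityMeasure μ := by
  constructor
  have := hμ ∅ (fun _ => Set.univ) (fun _ => MeasurableSet.univ)
  simpa using this

lemma unif_eq (μ : Measure (ℕ → ℝ)) (hμ : IsUniformProductMeasure μ) :
    μ = Measure.infinitePi (fun _ : ℕ => volume.restrict (Set.Icc (0 : ℝ) 1)) := by
  apply Measure.eq_infinitePi
  intro s t ht
  rw [← hμ s t ht]
  rfl

lemma upd_meas (i : ℕ) : Measurable (fun p : (ℕ → ℝ) × ℝ => Function.update p.1 i p.2) := by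
  rw [measurable_pi_iff]
  intro j
  by_cases h : j = i
  · subst h; simpa using measurable_snd
  · simp only [Function.update_of_ne h]; fun_prop

lemma unif_upd (μ : Measure (ℕ → ℝ)) (hμ : IsUniformProductMeasure μ) (i : ℕ) :
    (μ.prod (volume.restrict (Set.Icc (0 : ℝ) 1))).map
      (fun p : (ℕ → ℝ) × ℝ => Function.update p.1 i p.2) = μ := by
  have := unif_prob μ hμ
  conv_rhs => rw [unif_eq μ hμ]
  apply Measure.eq_infinitePi
  intro s t ht
  rw [Measure.map_apply (upd_meas i) (MeasurableSet.pi s.countable_toSet fun j _ => ht j)]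
  have e : (fun p : (ℕ → ℝ) × ℝ => Function.update p.1 i p.2) ⁻¹' ((s : Set ℕ).pi t) =
      {f : ℕ → ℝ | ∀ j ∈ s.erase i, f j ∈ t j} ×ˢ (if i ∈ s then t i else Set.univ) := by
    ext ⟨f, x⟩
    simp only [Set.mem_preimage, Set.mem_pi, Finset.mem_coe, Set.mem_prod, Set.mem_ofPred_eq,
      Finset.mem_erase]
    constructor
    · intro h
      refine ⟨fun j hj => by simpa [Function.update_of_ne hj.1] using h j hj.2, ?_⟩
      split_ifs with hi
      · simpa using h i hi
      · trivial
    · rintro ⟨h1, h2⟩ j hj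
      by_cases h : j = i
      · subst h; rw [if_pos hj] at h2; simpa using h2
      · simpa [Function.update_of_ne h] using h1 j ⟨h, hj⟩
  rw [e, Measure.prod_prod, hμ _ _ ht]
  by_cases hi : i ∈ s
  · rw [if_pos hi, Finset.prod_erase_mul _ _ hi]
  · rw [if_neg hi, Finset.erase_eq_of_notMem hi]; simp

lemma upd_lint (μ : Measure (ℕ → ℝ)) (hμ : IsUniformProductMeasure μ) (i : ℕ)
    (V : (ℕ → ℝ) → ENNReal) (hV : Measurable V) :
    ∫⁻ Θ, V Θ ∂μ = ∫⁻ Θ, (∫⁻ θ in Set.Icc (0 : ℝ) 1, V (Function.update Θ i θ)) ∂μ := by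
  have := unif_prob μ hμ
  conv_lhs => rw [← unif_upd μ hμ i]
  rw [lintegral_map hV (upd_meas i)]
  exact lintegral_prod _ ((hV.comp (upd_meas i)).aemeasurable)

lemma upd_lint_meas (i : ℕ) (V : (ℕ → ℝ) → ENNReal) (hV : Measurable V) :
    Measurable (fun Θ => ∫⁻ θ in Set.Icc (0 : ℝ) 1, V (Function.update Θ i θ)) :=
  (hV.comp (upd_meas i)).lintegral_prod_right'

lemma tsum_upd (a φ : ℕ → ℝ) (ha : Summable fun n => |a n|) (Θ : ℕ → ℝ) (i : ℕ) (θ : ℝ) :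
    ∑' n, a n * Real.sin (φ n + 2 * Real.pi * Function.update Θ i θ n) =
      ∑' n, a n * Real.sin (φ n + 2 * Real.pi * Θ n) - a i * Real.sin (φ i + 2 * Real.pi * Θ i)
        + a i * Real.sin (φ i + 2 * Real.pi * θ) := by
  have hs : Summable fun n => a n * Real.sin (φ n + 2 * Real.pi * Θ n) := by
    refine Summable.of_norm_bounded ha fun n => ?_
    rw [Real.norm_eq_abs, abs_mul]
    exact mul_le_of_le_one_right (abs_nonneg _) (Real.abs_sin_le_one _)
  have := hs.hasSum.update i (a i * Real.sin (φ i + 2 * Real.pi * θ))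
  have e : Function.update (fun n => a n * Real.sin (φ n + 2 * Real.pi * Θ n)) i
      (a i * Real.sin (φ i + 2 * Real.pi * θ)) =
      fun n => a n * Real.sin (φ n + 2 * Real.pi * Function.update Θ i θ n) := by
    ext n
    by_cases h : n = i
    · subst h; simp
    · simp [Function.update_of_ne h]
  rw [e] at this
  rw [this.tsum_eq]; ring

lemma X_cont (a φ : ℕ → ℝ) (ha : Summable fun n => |a n|) :
    Continuous fun Θ : ℕ → ℝ => ∑' n, a n * Real.sin (φ n + 2 * Real.pi * Θ n) := by
  refine continuous_tsum (fun n => by fun_prop) ha fun n Θ => ?_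
  rw [Real.norm_eq_abs, abs_mul]
  exact mul_le_of_le_one_right (abs_nonneg _) (Real.abs_sin_le_one _)

lemma law_le (μ : Measure (ℕ → ℝ)) (hμ : IsUniformProductMeasure μ)
    (a φ : ℕ → ℝ) (ha : Summable fun n => |a n|) (i j k : ℕ) (hij : i ≠ j) (hik : i ≠ k)
    (hjk : j ≠ k) (δ : ℝ) (hδ : 0 < δ) (hi : δ ≤ |a i|) (hj : δ ≤ |a j|) (hk : δ ≤ |a k|) :
    μ.map (fun Θ : ℕ → ℝ => ∑' n, a n * Real.sin (φ n + 2 * Real.pi * Θ n)) ≤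
      (ENNReal.ofReal δ⁻¹ * (3 * cc ^ 2)) • volume := by
  have hpr := unif_prob μ hμ
  set X : (ℕ → ℝ) → ℝ := fun Θ => ∑' n, a n * Real.sin (φ n + 2 * Real.pi * Θ n) with hX
  have hXm : Measurable X := (X_cont a φ ha).measurable
  have hne : ∀ n, δ ≤ |a n| → a n ≠ 0 := fun n h h0 => by
    rw [h0, abs_zero] at h; linarith
  have hcube : ∀ n, δ ≤ |a n| → ∫⁻ x, ap (a n) x ^ 3 ≤ ENNReal.ofReal (√(δ⁻¹)) * cc := by
    intro n h
    refine (ap_cube (a n) (hne n h)).trans ?_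
    gcongr
  refine Measure.le_iff.2 fun A hA => ?_
  rw [Measure.map_apply hXm hA]
  set U : ℝ → ENNReal := A.indicator 1 with hUdef
  have hU : Measurable U := measurable_one.indicator hA
  have e1 : μ (X ⁻¹' A) = ∫⁻ Θ, U (X Θ) ∂μ := by
    rw [← lintegral_map hU hXm, hUdef, lintegral_indicator_one hA, Measure.map_apply hXm hA]
  have e2 : (volume A) = ∫⁻ x, U x := by rw [hUdef, lintegral_indicator_one hA]
  have hV1 : Measurable fun Θ => U (X Θ) := hU.comp hXm
  have hV2 := upd_lint_meas k _ hV1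
  have hV3 := upd_lint_meas j _ hV2
  rw [e1, upd_lint μ hμ k _ hV1, upd_lint μ hμ j _ hV2, upd_lint μ hμ i _ hV3]
  have bound : ∀ Θ : ℕ → ℝ, ∫⁻ θ₁ in Set.Icc (0 : ℝ) 1, ∫⁻ θ₂ in Set.Icc (0 : ℝ) 1,
      ∫⁻ θ₃ in Set.Icc (0 : ℝ) 1,
        U (X (Function.update (Function.update (Function.update Θ i θ₁) j θ₂) k θ₃)) ≤
      ENNReal.ofReal δ⁻¹ * (3 * cc ^ 2) * volume A := by
    intro Θ
    set s : ℝ := X Θ - a i * Real.sin (φ i + 2 * Real.pi * Θ i)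
      - a j * Real.sin (φ j + 2 * Real.pi * Θ j) - a k * Real.sin (φ k + 2 * Real.pi * Θ k)
    have hx : ∀ θ₁ θ₂ θ₃,
        X (Function.update (Function.update (Function.update Θ i θ₁) j θ₂) k θ₃) =
        s + a i * Real.sin (φ i + 2 * Real.pi * θ₁) + a j * Real.sin (φ j + 2 * Real.pi * θ₂)
          + a k * Real.sin (φ k + 2 * Real.pi * θ₃) := by
      intro θ₁ θ₂ θ₃
      simp only [hX, s]
      rw [tsum_upd a φ ha, tsum_upd a φ ha, tsum_upd a φ ha]
      simp only [Function.update_of_ne hij.symm, Function.update_of_ne hik.symm,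
        Function.update_of_ne hjk.symm]
      ring
    simp_rw [hx]
    calc _ ≤ ∫⁻ θ₁ in Set.Icc (0 : ℝ) 1, ∫⁻ θ₂ in Set.Icc (0 : ℝ) 1,
          ∫⁻ z, ap (a k) z ^ 2 * U (s + a i * Real.sin (φ i + 2 * Real.pi * θ₁) +
            a j * Real.sin (φ j + 2 * Real.pi * θ₂) + z) :=
          lintegral_mono fun θ₁ => lintegral_mono fun θ₂ =>
            arc_le (a k) (φ k) (hne k hk) fun z => U (s + a i * Real.sin (φ i + 2 * Real.pi * θ₁) +
            a j * Real.sin (φ j + 2 * Real.pi * θ₂) + z)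
      _ ≤ ∫⁻ θ₁ in Set.Icc (0 : ℝ) 1, ∫⁻ y, ap (a j) y ^ 2 *
          ∫⁻ z, ap (a k) z ^ 2 * U (s + a i * Real.sin (φ i + 2 * Real.pi * θ₁) + y + z) :=
          lintegral_mono fun θ₁ =>
            arc_le (a j) (φ j) (hne j hj) fun y => ∫⁻ z, ap (a k) z ^ 2 *
              U (s + a i * Real.sin (φ i + 2 * Real.pi * θ₁) + y + z)
      _ ≤ ∫⁻ x, ap (a i) x ^ 2 * ∫⁻ y, ap (a j) y ^ 2 *
          ∫⁻ z, ap (a k) z ^ 2 * U (s + x + y + z) :=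
            arc_le (a i) (φ i) (hne i hi) fun x => ∫⁻ y, ap (a j) y ^ 2 *
              ∫⁻ z, ap (a k) z ^ 2 * U (s + x + y + z)
      _ ≤ _ := tri _ _ _ U (ap_meas _) (ap_meas _) (ap_meas _) hU s
      _ ≤ ((ENNReal.ofReal (√(δ⁻¹)) * cc) * (ENNReal.ofReal (√(δ⁻¹)) * cc) +
          (ENNReal.ofReal (√(δ⁻¹)) * cc) * (ENNReal.ofReal (√(δ⁻¹)) * cc) +
          (ENNReal.ofReal (√(δ⁻¹)) * cc) * (ENNReal.ofReal (√(δ⁻¹)) * cc)) * ∫⁻ x, U x := by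
            gcongr <;> apply hcube <;> assumption
      _ = _ := by
          rw [← e2]
          have : ENNReal.ofReal δ⁻¹ = ENNReal.ofReal (√(δ⁻¹)) * ENNReal.ofReal (√(δ⁻¹)) := by
            rw [← ENNReal.ofReal_mul (by positivity), Real.mul_self_sqrt (by positivity)]
          rw [this]; ring
  refine (lintegral_mono bound).trans ?_
  rw [lintegral_const, measure_univ, mul_one]
  simp

lemma dens (ν : Measure ℝ) [IsFiniteMeasure ν] (K : ℝ) (hK : 0 ≤ K)
    (h : ν ≤ ENNReal.ofReal K • volume) :
    ∃ h : ℝ → ℝ, (∀ t, 0 ≤ h t) ∧ ν = volume.withDensity (fun t => ENNReal.ofReal (h t)) ∧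
      ∀ t, h t ≤ K := by
  have hac : ν ≪ volume := fun s hs => by
    have := h s
    simpa [hs] using this
  have hle : ν.rnDeriv volume ≤ᵐ[volume] fun _ => ENNReal.ofReal K := by
    refine ae_le_of_forall_setLIntegral_le_of_sigmaFinite (Measure.measurable_rnDeriv _ _)
      fun s hs _ => ?_
    rw [Measure.setLIntegral_rnDeriv hac]
    simpa using h s
  refine ⟨fun t => min K (ν.rnDeriv volume t).toReal, fun t => le_min hK ENNReal.toReal_nonneg, ?_,
    fun t => min_le_left _ _⟩
  conv_lhs => rw [← Measure.withDensity_rnDeriv_eq ν volume hac]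
  refine withDensity_congr_ae ?_
  filter_upwards [hle] with t ht
  have hfin : ν.rnDeriv volume t ≠ ⊤ := ne_top_of_le_ne_top ENNReal.ofReal_ne_top ht
  rw [min_eq_right (ENNReal.toReal_le_of_le_ofReal hK ht), ENNReal.ofReal_toReal hfin]

theorem stmt_11 (b β : ℝ) (hb : 1 < b) (hβ : β ∈ Set.Ioo (0 : ℝ) (1 / 2))
    (μ : Measure (ℕ → ℝ)) (hμ : IsUniformProductMeasure μ) :
    ∃ C₃ > (0 : ℝ), ∀ x ∈ Set.Icc (0 : ℝ) 1, ∀ y ∈ Set.Icc (0 : ℝ) 1,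
      0 < |x - y| → |x - y| ≤ 1 / (2 * b ^ 2) →
      ∃ h : ℝ → ℝ, (∀ t, 0 ≤ h t) ∧
        Measure.map (fun Θ : ℕ → ℝ =>
            ∑' n : ℕ, 2 * b ^ (-β * (n : ℝ)) *
              Real.sin (Real.pi * b ^ n * (x + y) + 2 * Real.pi * Θ n) *
              Real.sin (Real.pi * b ^ n * (y - x))) μ =
          volume.withDensity (fun t => ENNReal.ofReal (h t)) ∧
        ∀ t, h t ≤ C₃ * |x - y| ^ (-β) := by
  have hb0 : 0 < b := by linarith
  have hp := Real.pi_pos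
  have hpr := unif_prob μ hμ
  set D : ℝ := (3 * cc ^ 2).toReal with hD
  have hcD : 3 * cc ^ 2 = ENNReal.ofReal D := by
    rw [hD, ENNReal.ofReal_toReal]
    exact ENNReal.mul_ne_top (by simp) (ENNReal.pow_ne_top cc_lt.ne)
  have hD0 : 0 ≤ D := ENNReal.toReal_nonneg
  refine ⟨b ^ 3 * D + 1, by positivity, ?_⟩
  intro x _ y _ hd hd2
  set d := |x - y| with hdd
  have hsin : ∀ n : ℕ, |Real.sin (Real.pi * b ^ n * (y - x))| = |Real.sin (Real.pi * b ^ n * d)| := by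
    intro n
    rw [hdd]
    rcases abs_choice (x - y) with h | h
    · rw [h, ← abs_neg, ← Real.sin_neg]; congr 2; ring
    · rw [h]; congr 2; ring
  obtain ⟨N, hN1, hN2⟩ := exists_nat_pow_near (x := 1 / (2 * d)) (y := b) (by
    rw [le_div_iff₀ (by positivity)]
    rw [le_div_iff₀ (by positivity)] at hd2
    nlinarith) hb
  have hN : 2 < N + 1 := by
    have : b ^ 2 < b ^ (N + 1) := by
      refine lt_of_le_of_lt ?_ hN2
      rw [le_div_iff₀ (by positivity)]
      rw [le_div_iff₀ (by positivity)] at hd2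
      linarith
    exact (pow_lt_pow_iff_right₀ hb).1 this
  obtain ⟨m, rfl⟩ : ∃ m, N = m + 2 := ⟨N - 2, by omega⟩
  rw [le_div_iff₀ (by positivity)] at hN1
  rw [div_lt_iff₀ (by positivity)] at hN2
  set a : ℕ → ℝ := fun n => 2 * b ^ (-β * (n : ℝ)) * Real.sin (Real.pi * b ^ n * (y - x)) with ha
  set φ : ℕ → ℝ := fun n => Real.pi * b ^ n * (x + y) with hφ
  have hsum : Summable fun n => |a n| := by
    have hg : Summable fun n : ℕ => 2 * (b ^ (-β)) ^ n :=
      (summable_geometric_of_lt_one (by positivity)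
        (Real.rpow_lt_one_of_one_lt_of_neg hb (by linarith [hβ.1]))).mul_left 2
    refine Summable.of_nonneg_of_le (fun n => abs_nonneg _) (fun n => ?_) hg
    rw [ha]
    simp only
    rw [abs_mul, abs_of_pos (by positivity), Real.rpow_mul_natCast hb0.le]
    exact mul_le_of_le_one_right (by positivity) (Real.abs_sin_le_one _)
  set δ : ℝ := b⁻¹ ^ 3 * d ^ β with hδ
  have hδ0 : 0 < δ := by positivity
  have hlow : ∀ n, m ≤ n → n ≤ m + 2 → δ ≤ |a n| := by
    intro n h1 h2
    have u1 : b ^ n * d ≤ 1 / 2 := by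
      have : b ^ n ≤ b ^ (m + 2) := pow_le_pow_right₀ hb.le h2
      nlinarith
    have u2 : b⁻¹ ^ 3 ≤ 2 * (b ^ n * d) := by
      have h3 : b ^ m ≤ b ^ n := pow_le_pow_right₀ hb.le h1
      rw [inv_pow, inv_le_iff_one_le_mul₀ (by positivity)]
      calc 1 ≤ b ^ (m + 2 + 1) * (2 * d) := hN2.le
        _ = b ^ m * (2 * d * b ^ 3) := by ring
        _ ≤ b ^ n * (2 * d * b ^ 3) := by gcongr
        _ = _ := by ring
    have u3 : b⁻¹ ^ 3 ≤ |Real.sin (Real.pi * b ^ n * (y - x))| := by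
      rw [hsin]
      refine le_trans (le_trans u2 ?_) (le_abs_self _)
      have := Real.mul_le_sin (x := Real.pi * b ^ n * d) (by positivity) (by nlinarith)
      refine le_trans (le_of_eq ?_) this
      field_simp
    have u4 : d ^ β ≤ b ^ (-β * (n : ℝ)) := by
      have : d ≤ (b ^ n)⁻¹ := by
        rw [le_inv_comm₀ hd (by positivity), ← one_div, le_div_iff₀ hd]; linarith
      calc d ^ β ≤ ((b ^ n)⁻¹) ^ β := Real.rpow_le_rpow hd.le this hβ.1.le
        _ = _ := by
          rw [← Real.rpow_natCast, ← Real.rpow_neg hb0.le, ← Real.rpow_mul hb0.le]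
          congr 1; ring
    rw [ha]
    simp only
    rw [abs_mul, abs_of_pos (by positivity), hδ, mul_comm]
    have : 0 ≤ b ^ (-β * (n : ℝ)) := by positivity
    gcongr
    linarith
  have hlaw := law_le μ hμ a φ hsum m (m + 1) (m + 2) (by omega) (by omega) (by omega) δ hδ0
    (hlow _ (by omega) (by omega)) (hlow _ (by omega) (by omega)) (hlow _ (by omega) (by omega))
  rw [hcD, ← ENNReal.ofReal_mul (by positivity)] at hlaw
  have hfun : (fun Θ : ℕ → ℝ => ∑' n : ℕ, 2 * b ^ (-β * (n : ℝ)) *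
              Real.sin (Real.pi * b ^ n * (x + y) + 2 * Real.pi * Θ n) *
              Real.sin (Real.pi * b ^ n * (y - x))) =
      fun Θ : ℕ → ℝ => ∑' n, a n * Real.sin (φ n + 2 * Real.pi * Θ n) := by
    ext Θ
    refine tsum_congr fun n => ?_
    simp only [ha, hφ]; ring
  rw [hfun]
  obtain ⟨h, h0, h1, h2⟩ := dens _ (δ⁻¹ * D) (by positivity) hlaw
  refine ⟨h, h0, h1, fun t => (h2 t).trans ?_⟩
  have : δ⁻¹ = b ^ 3 * d ^ (-β) := by
    rw [hδ, Real.rpow_neg hd.le, mul_inv, inv_pow, inv_inv]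
  rw [this]
  have : 0 ≤ d ^ (-β) := by positivity
  nlinarith
end
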